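/- arXiv:1402.5703 — 2 statements merged into one kernel-verified Lean document; each statement's English description precedes it below -/
import Mathlib

section
/- Let g, g' : [0,∞) → ℝ be continuous. Then for every t ≥ 0, sup_{0≤s≤t} |Γ(g)(s) − Γ(g')(s)| ≤ 2 · sup_{0≤s≤t} |g(s) − g'(s)|. In particular the Skorokhod map Γ is continuous with respect to local uniform convergence. -/
open MeasureTheory Set Filter

lemma sk_inf_le (u v : ℝ → ℝ) (hu : ContinuousOn u (Set.Ici 0)) (s C : ℝ) (hs : 0 ≤ s)
    (h : ∀ r ∈ Set.Icc 0 s, |u r - v r| ≤ C) :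
    sInf ((fun r => min (u r) 0) '' Set.Icc 0 s) ≤
      sInf ((fun r => min (v r) 0) '' Set.Icc 0 s) + C := by
  have hbdd : BddBelow ((fun r => min (u r) 0) '' Set.Icc 0 s) := by
    apply isCompact_Icc.bddBelow_image
    exact (hu.mono Set.Icc_subset_Ici_self).inf continuousOn_const
  rw [← sub_le_iff_le_add]
  apply le_csInf ((Set.nonempty_Icc.2 hs).image _)
  rintro _ ⟨r, hr, rfl⟩
  have h1 : sInf ((fun r => min (u r) 0) '' Set.Icc 0 s) ≤ min (u r) 0 :=
    csInf_le hbdd ⟨r, hr, rfl⟩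
  have h2 := abs_le.1 (h r hr)
  have h3 := min_le_left (u r) 0
  have h4 := min_le_right (u r) 0
  have h5 : 0 ≤ C := (abs_nonneg _).trans (h r hr)
  simp only
  apply le_min <;> linarith

lemma sk_key (u v : ℝ → ℝ) (hu : ContinuousOn u (Set.Ici 0)) (hv : ContinuousOn v (Set.Ici 0))
    (s C : ℝ) (hs : 0 ≤ s) (h : ∀ r ∈ Set.Icc 0 s, |u r - v r| ≤ C) :
    |(u s - sInf ((fun r => min (u r) 0) '' Set.Icc 0 s)) -
      (v s - sInf ((fun r => min (v r) 0) '' Set.Icc 0 s))| ≤ 2 * C := by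
  have h1 := sk_inf_le u v hu s C hs h
  have h2 := sk_inf_le v u hv s C hs (fun r hr => by rw [abs_sub_comm]; exact h r hr)
  have h3 := abs_le.1 (h s ⟨hs, le_rfl⟩)
  rw [abs_le]
  constructor <;> linarith

/-- The one-dimensional Skorokhod map `Γ(g)(t) = g t - min_{0 ≤ s ≤ t} (min (g s) 0)`
is Lipschitz with constant `2` in the supremum distance on each `[0, t]`; in
particular it is (sequentially) continuous with respect to local uniform
convergence on `[0,∞)`. -/
theorem skorokhod_map_lipschitz
    (Γ : (ℝ → ℝ) → ℝ → ℝ)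
    (hΓ : ∀ (u : ℝ → ℝ) (t : ℝ),
      Γ u t = u t - sInf ((fun s => min (u s) 0) '' Set.Icc 0 t))
    (g g' : ℝ → ℝ) (hg : ContinuousOn g (Set.Ici 0))
    (hg' : ContinuousOn g' (Set.Ici 0)) :
    (∀ t ≥ (0 : ℝ),
      sSup ((fun s => |Γ g s - Γ g' s|) '' Set.Icc 0 t) ≤
        2 * sSup ((fun s => |g s - g' s|) '' Set.Icc 0 t)) ∧
    (∀ (F : ℕ → ℝ → ℝ) (f : ℝ → ℝ), (∀ n, ContinuousOn (F n) (Set.Ici 0)) →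
      ContinuousOn f (Set.Ici 0) →
      TendstoLocallyUniformlyOn F f atTop (Set.Ici 0) →
      TendstoLocallyUniformlyOn (fun n => Γ (F n)) (Γ f) atTop (Set.Ici 0)) := by
  refine ⟨fun t ht => ?_, fun F f hF hf hlim => ?_⟩
  · apply csSup_le ((Set.nonempty_Icc.2 ht).image _)
    rintro _ ⟨s, hs, rfl⟩
    simp only [hΓ]
    apply sk_key g g' hg hg' s _ hs.1
    intro r hr
    refine le_csSup ?_ ⟨r, ⟨hr.1, hr.2.trans hs.2⟩, rfl⟩
    apply isCompact_Icc.bddAbove_image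
    exact ((hg.mono Set.Icc_subset_Ici_self).sub (hg'.mono Set.Icc_subset_Ici_self)).abs
  · rw [Metric.tendstoLocallyUniformlyOn_iff]
    intro ε hε x hx
    have h1 := hlim.mono (show Set.Icc (0 : ℝ) (x + 1) ⊆ Set.Ici 0 from Set.Icc_subset_Ici_self)
    rw [tendstoLocallyUniformlyOn_iff_tendstoUniformlyOn_of_compact isCompact_Icc,
      Metric.tendstoUniformlyOn_iff] at h1
    refine ⟨Set.Icc 0 (x + 1), ?_, ?_⟩
    · rw [← Set.Ici_inter_Iic]
      exact inter_mem self_mem_nhdsWithin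
        (mem_nhdsWithin_of_mem_nhds (Iic_mem_nhds (by linarith)))
    · filter_upwards [h1 (ε / 3) (by positivity)] with n hn y hy
      rw [Real.dist_eq, hΓ, hΓ]
      have := sk_key f (F n) hf (hF n) y (ε / 3) hy.1 (fun r hr => by
        have := hn r ⟨hr.1, hr.2.trans hy.2⟩
        rw [Real.dist_eq] at this
        exact this.le)
      linarith
end

section
/- Let (Ω, F, P) be a probability space with a filtration (F_k)_{k∈ℕ}, let x ∈ ℤ, and let (U_k)_{k∈ℕ} be an integer-valued (F_k)-adapted process with U_0 = x almost surely, such that for every k, |U_{k+1} − U_k| = 1 almost surely and 1_{U_k ≠ 0} · E[U_{k+1} − U_k | F_k] = 0 almost surely. Then for every k ∈ ℕ, E[ #{ i : 0 ≤ i < k, U_i = 0 } ] ≤ |x| + √k. -/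
open MeasureTheory Finset

lemma occ_aux_orth {Ω : Type*} {m0 : MeasurableSpace Ω} {μ : Measure Ω} [IsProbabilityMeasure μ]
    (m : MeasurableSpace Ω) (hm : m ≤ m0) (V D : Ω → ℝ) (hV : Measurable[m] V)
    (hD : Integrable D μ) (hc : ∀ᵐ ω ∂μ, V ω ≠ 0 → (μ[D | m]) ω = 0)
    (h : ℝ → ℝ) (hh : Measurable h) (h0 : h 0 = 0)
    (hi : Integrable (fun ω => h (V ω) * D ω) μ) :
    ∫ ω, h (V ω) * D ω ∂μ = 0 := by
  have hs : StronglyMeasurable[m] (fun ω => h (V ω)) := (hh.comp hV).stronglyMeasurable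
  have e := condExp_mul_of_stronglyMeasurable_left (μ := μ) hs hi hD
  rw [← integral_condExp hm]
  refine integral_eq_zero_of_ae ?_
  filter_upwards [e, hc] with ω e hc
  have e' : (μ[fun ω => h (V ω) * D ω | m]) ω = h (V ω) * (μ[D | m]) ω := e
  rw [e']
  by_cases hv : V ω = 0
  · simp [hv, h0]
  · simp [hc hv]

/-- Sign function on the reals. -/
noncomputable def occSgn (y : ℝ) : ℝ := if 0 < y then 1 else if y < 0 then -1 else 0

lemma occSgn_meas : Measurable occSgn := by
  unfold occSgn
  exact Measurable.ite measurableSet_Ioi measurable_const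
    (Measurable.ite measurableSet_Iio measurable_const measurable_const)

lemma occ_abs (n : ℤ) (u v : ℝ) (hu : u = n) (hv : |v - u| = 1) :
    |v| = |u| + occSgn u * (v - u) + if u = 0 then 1 else 0 := by
  unfold occSgn
  rcases lt_trichotomy n 0 with h | h | h
  · have h1 : u ≤ -1 := by rw [hu]; exact_mod_cast (by omega : n ≤ -1)
    have := abs_le.1 hv.le
    rw [abs_of_nonpos (by linarith : v ≤ 0), abs_of_nonpos (by linarith : u ≤ 0),
      if_neg (by linarith), if_pos (by linarith), if_neg (by linarith)]
    ring
  · have : u = 0 := by simp [hu, h]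
    subst this
    simpa using hv
  · have h1 : 1 ≤ u := by rw [hu]; exact_mod_cast (by omega : 1 ≤ n)
    have := abs_le.1 hv.le
    rw [abs_of_nonneg (by linarith : 0 ≤ v), abs_of_nonneg (by linarith : 0 ≤ u),
      if_pos (by linarith), if_neg (by linarith)]
    ring

/-- Occupation-time bound (estimate (3.15)): if `U` is an adapted integer-valued
process started at `x ∈ ℤ` with `|U_{k+1} - U_k| = 1` a.s. whose increments are
conditionally centered off zero (`1_{U_k ≠ 0} E[U_{k+1} - U_k | ℱ k] = 0` a.s.),
then the expected number of visits to `0` before time `k` is at most `|x| + √k`. -/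
theorem expected_occupation_time_le
    {Ω : Type*} {m0 : MeasurableSpace Ω} {μ : Measure Ω} [IsProbabilityMeasure μ]
    (ℱ : Filtration ℕ m0) (x : ℤ)
    (U : ℕ → Ω → ℝ) (hadp : Adapted ℱ U)
    (hU0 : ∀ᵐ ω ∂μ, U 0 ω = (x : ℝ))
    (hint : ∀ k, ∀ᵐ ω ∂μ, ∃ n : ℤ, U k ω = (n : ℝ))
    (hinc : ∀ k, ∀ᵐ ω ∂μ, |U (k + 1) ω - U k ω| = 1)
    (hcentered : ∀ k, ∀ᵐ ω ∂μ,
      U k ω ≠ 0 → (μ[fun ω' => U (k + 1) ω' - U k ω' | ℱ k]) ω = 0) :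
    ∀ k : ℕ,
      (∫ ω, (((Finset.range k).filter (fun i => U i ω = 0)).card : ℝ) ∂μ)
        ≤ |(x : ℝ)| + Real.sqrt k := by
  have hmk : ∀ k, Measurable[ℱ k] (U k) := fun k => hadp k
  have hm : ∀ k, Measurable (U k) := fun k => (hmk k).mono (ℱ.le k) le_rfl
  have hb : ∀ k : ℕ, ∀ᵐ ω ∂μ, |U k ω| ≤ |(x : ℝ)| + k := by
    intro k
    induction k with
    | zero => filter_upwards [hU0] with ω h; simp [h]
    | succ k ih =>
      filter_upwards [ih, hinc k] with ω h1 h2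
      have := abs_add_le (U (k+1) ω - U k ω) (U k ω)
      rw [sub_add_cancel] at this
      push_cast
      linarith
  have hbi : ∀ (f : Ω → ℝ) (C : ℝ), Measurable f → (∀ᵐ ω ∂μ, |f ω| ≤ C) → Integrable f μ :=
    fun f C hf h => Integrable.of_bound hf.aestronglyMeasurable C h
  have hD : ∀ k, Integrable (fun ω => U (k+1) ω - U k ω) μ := fun k =>
    hbi _ 1 ((hm _).sub (hm _)) ((hinc k).mono fun ω h => h.le)
  have hUi : ∀ k, Integrable (fun ω => |U k ω|) μ := fun k =>
    hbi _ (|(x:ℝ)| + k) (hm k).abs ((hb k).mono fun ω h => by simpa using h)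
  have hU2 : ∀ k, Integrable (fun ω => U k ω ^ 2) μ := fun k =>
    hbi _ ((|(x:ℝ)| + k)^2) ((hm k).pow_const 2) ((hb k).mono fun ω h => by
      rw [abs_pow]; gcongr)
  have hsi : ∀ k, Integrable (fun ω => occSgn (U k ω) * (U (k+1) ω - U k ω)) μ := fun k =>
    hbi _ 1 ((occSgn_meas.comp (hm k)).mul ((hm _).sub (hm _))) ((hinc k).mono fun ω h => by
      rw [abs_mul, h, mul_one]; unfold occSgn; split_ifs <;> simp)
  have hui : ∀ k, Integrable (fun ω => (2 * U k ω) * (U (k+1) ω - U k ω)) μ := fun k =>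
    hbi _ (2 * (|(x:ℝ)| + k)) (((hm k).const_mul 2).mul ((hm _).sub (hm _))) (by
      filter_upwards [hinc k, hb k] with ω h h'
      rw [abs_mul, h, mul_one, abs_mul, abs_two]; linarith)
  have hii : ∀ k, Integrable (fun ω => if U k ω = 0 then (1:ℝ) else 0) μ := fun k =>
    hbi _ 1 (Measurable.ite (hm k (measurableSet_singleton 0)) measurable_const measurable_const)
      (Filter.Eventually.of_forall fun ω => by split_ifs <;> simp)
  have hA : ∀ k, ∫ ω, |U (k+1) ω| ∂μ
      = ∫ ω, |U k ω| ∂μ + ∫ ω, (if U k ω = 0 then (1:ℝ) else 0) ∂μ := by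
    intro k
    have h1 := occ_aux_orth (ℱ k) (ℱ.le k) (U k) _ (hmk k) (hD k) (hcentered k) occSgn
      occSgn_meas (by simp [occSgn]) (hsi k)
    have h2 : ∫ ω, |U (k+1) ω| ∂μ = ∫ ω, (|U k ω| + occSgn (U k ω) * (U (k+1) ω - U k ω)
        + if U k ω = 0 then (1:ℝ) else 0) ∂μ := by
      refine integral_congr_ae ?_
      filter_upwards [hint k, hinc k] with ω ⟨n, hn⟩ h
      exact occ_abs n _ _ hn h
    rw [h2, integral_add ((hUi k).fun_add (hsi k)) (hii k), integral_add (hUi k) (hsi k), h1, add_zero]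
  have hB : ∀ k, ∫ ω, U (k+1) ω ^ 2 ∂μ = ∫ ω, U k ω ^ 2 ∂μ + 1 := by
    intro k
    have h1 := occ_aux_orth (ℱ k) (ℱ.le k) (U k) _ (hmk k) (hD k) (hcentered k) (fun y => 2 * y)
      (measurable_id.const_mul 2) (by simp) (hui k)
    have h2 : ∫ ω, U (k+1) ω ^ 2 ∂μ
        = ∫ ω, (U k ω ^ 2 + (2 * U k ω) * (U (k+1) ω - U k ω) + 1) ∂μ := by
      refine integral_congr_ae ?_
      filter_upwards [hinc k] with ω h
      have : (U (k+1) ω - U k ω)^2 = 1 := by rw [← sq_abs, h, one_pow]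
      linarith
    rw [h2, integral_add ((hU2 k).fun_add (hui k)) (integrable_const 1),
      integral_add (hU2 k) (hui k), h1, add_zero]
    simp
  have hB' : ∀ k : ℕ, ∫ ω, U k ω ^ 2 ∂μ = (x:ℝ)^2 + k := by
    intro k
    induction k with
    | zero =>
      rw [integral_congr_ae (g := fun _ => (x:ℝ)^2) (hU0.mono fun ω h => by simp only [h])]
      simp
    | succ k ih => rw [hB, ih]; push_cast; ring
  have hA' : ∀ k : ℕ, ∫ ω, |U k ω| ∂μ = |(x:ℝ)|
      + ∑ i ∈ Finset.range k, ∫ ω, (if U i ω = 0 then (1:ℝ) else 0) ∂μ := by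
    intro k
    induction k with
    | zero =>
      rw [integral_congr_ae (g := fun _ => |(x:ℝ)|) (hU0.mono fun ω h => by simp only [h])]
      simp
    | succ k ih => rw [hA, ih, Finset.sum_range_succ]; ring
  intro k
  have hL : (∫ ω, (((Finset.range k).filter (fun i => U i ω = 0)).card : ℝ) ∂μ)
      = ∑ i ∈ Finset.range k, ∫ ω, (if U i ω = 0 then (1:ℝ) else 0) ∂μ := by
    rw [← integral_finsetSum _ fun i _ => hii i]
    refine integral_congr_ae (Filter.Eventually.of_forall fun ω => ?_)
    simp
  rw [hL]
  set a := ∫ ω, |U k ω| ∂μ with ha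
  have hv : 0 ≤ ∫ ω, (|U k ω| - a)^2 ∂μ := integral_nonneg fun ω => sq_nonneg _
  have hv2 : ∫ ω, (|U k ω| - a)^2 ∂μ = (x:ℝ)^2 + k - a^2 := by
    have : ∀ ω, (|U k ω| - a)^2 = U k ω ^ 2 - (2 * a) * |U k ω| + a^2 := fun ω => by
      rw [← sq_abs (U k ω)]; ring
    simp_rw [this]
    have hsub : Integrable (fun ω => U k ω ^ 2 - (2 * a) * |U k ω|) μ :=
      (hU2 k).sub ((hUi k).const_mul _)
    rw [integral_add hsub (integrable_const _),
      integral_sub (hU2 k) ((hUi k).const_mul _), integral_const_mul, hB', ← ha]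
    simp; ring
  have h1 : a ≤ |(x:ℝ)| + Real.sqrt k := by
    refine le_of_abs_le (abs_le_of_sq_le_sq ?_ (by positivity))
    have h2 := Real.sq_sqrt (Nat.cast_nonneg (α := ℝ) k)
    have h3 := sq_abs (x:ℝ)
    have h4 : 0 ≤ |(x:ℝ)| * Real.sqrt k := by positivity
    nlinarith
  have := hA' k
  have := abs_nonneg (x:ℝ)
  linarith
end
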